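/- Let ℓ ≥ 2 and S = ℂ[z_1,…,z_ℓ]. Let α_1,…,α_n (n ≥ 2) be pairwise non-proportional nonzero linear forms on ℂ^ℓ and Q = ∏_{i=1}^n α_i. Then the set of minimal primes of the Jacobian ideal J(Q) is exactly { (α_i, α_j) : 1 ≤ i < j ≤ n }, i.e., a prime ideal P of S is a minimal prime over J(Q) if and only if P = (α_i, α_j) for some pair i ≠ j. -/

import Mathlib

/-!
Write `Q = ∏ α_i`. By Euler's formula `n Q = ∑ z_k ∂_k Q`, so a prime `P ⊇ J(Q)` contains `Q`, hence
some `α_i`. Modulo `α_i` the Leibniz rule reads `∂_k Q ≡ a_{ik} ∏_{j ≠ i} α_j`, and choosing `k` with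
`a_{ik} ≠ 0` shows that `P` contains a second form `α_j`. Thus every prime over `J(Q)` contains some
ideal `(α_i, α_j)`, `i ≠ j` (`exists_pair_le`). Conversely `J(Q) ⊆ (α_i, α_j)`, since each term of
`∂_k Q` omits only one of the factors (`jac_le_pair`).

The ideals `(α_i, α_j)` are prime, and distinct ones are incomparable. Both facts come from one linear
projection: for independent `u, v` there is an algebra endomorphism `φ` of the polynomial ring
killing `lin u` and `lin v` and congruent to the identity modulo them, so that
`(lin u, lin v) = ker φ` is prime. Evaluating `φ` on a linear form shows that
a linear form in `(lin u, lin v)` is a linear combination of `lin u` and `lin v`, so an inclusion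
between two such ideals is an equality by
inverting a `2 × 2` matrix.
-/

open MvPolynomial

/-- The linear form with coefficient vector `a`, as a polynomial. -/
noncomputable def lin {ℓ : ℕ} (a : Fin ℓ → ℂ) : MvPolynomial (Fin ℓ) ℂ :=
  ∑ k, C (a k) * X k

/-- The Jacobian ideal of a polynomial `Q`, generated by its partial derivatives. -/
noncomputable def jac {ℓ : ℕ} (Q : MvPolynomial (Fin ℓ) ℂ) :
    Ideal (MvPolynomial (Fin ℓ) ℂ) :=
  Ideal.span (Set.range fun k => pderiv k Q)

lemma lin_add {ℓ : ℕ} (a b : Fin ℓ → ℂ) : lin (a + b) = lin a + lin b := by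
  simp [lin, add_mul, Finset.sum_add_distrib]

lemma lin_smul {ℓ : ℕ} (c : ℂ) (a : Fin ℓ → ℂ) : lin (c • a) = C c * lin a := by
  simp [lin, Finset.mul_sum, mul_assoc]

lemma lin_injective {ℓ : ℕ} : Function.Injective (lin (ℓ := ℓ)) := by
  intro a b h
  ext k
  have := congrArg (eval (Pi.single k (1 : ℂ))) h
  simpa [lin, Pi.single_apply] using this

lemma pderiv_lin {ℓ : ℕ} (a : Fin ℓ → ℂ) (k : Fin ℓ) : pderiv k (lin a) = C (a k) := by
  simp [lin, pderiv_X, Pi.single_apply]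

/-- Two non-proportional vectors admit a dual pair for the dot product. -/
lemma exists_dual_pair {ℓ : ℕ} {u v : Fin ℓ → ℂ} (hv : v ≠ 0) (h : ∀ c : ℂ, u ≠ c • v) :
    ∃ w x : Fin ℓ → ℂ, ∑ k, u k * w k = 1 ∧ ∑ k, v k * w k = 0 ∧
      ∑ k, u k * x k = 0 ∧ ∑ k, v k * x k = 1 := by
  obtain ⟨p, hp⟩ := Function.ne_iff.mp hv
  rw [Pi.zero_apply] at hp
  -- some `2 × 2` minor of the matrix with rows `u`, `v` does not vanish
  obtain ⟨q, hq⟩ : ∃ q, u p * v q - u q * v p ≠ 0 := by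
    by_contra! hc
    refine h (u p / v p) ?_
    ext q
    have := hc q
    simp only [Pi.smul_apply, smul_eq_mul]
    field_simp
    linear_combination -this
  obtain ⟨D, hD⟩ : ∃ D, D = u p * v q - u q * v p := ⟨_, rfl⟩
  rw [← hD] at hq
  refine ⟨Pi.single p (v q / D) - Pi.single q (v p / D),
    Pi.single q (u p / D) - Pi.single p (u q / D), ?_, ?_, ?_, ?_⟩ <;>
  simp only [Pi.sub_apply, mul_sub, Finset.sum_sub_distrib, Pi.single_apply, mul_ite, mul_zero,
    Finset.sum_ite_eq', Finset.mem_univ, if_true] <;>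
  field_simp
  · exact hD.symm
  · ring
  · ring
  · linear_combination -hD

/-- For non-proportional `u, v`, the ideal `(lin u, lin v)` is prime, and the linear forms in it are
the linear combinations of its two generators. -/
lemma pair_prime_and_mem {ℓ : ℕ} {u v : Fin ℓ → ℂ} (hv : v ≠ 0) (h : ∀ c : ℂ, u ≠ c • v) :
    (Ideal.span ({lin u, lin v} : Set (MvPolynomial (Fin ℓ) ℂ))).IsPrime ∧
    ∀ b : Fin ℓ → ℂ, lin b ∈ Ideal.span ({lin u, lin v} : Set (MvPolynomial (Fin ℓ) ℂ)) →
      ∃ p q : ℂ, b = p • u + q • v := by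
  obtain ⟨w, x, huw, hvw, hux, hvx⟩ := exists_dual_pair hv h
  set I := Ideal.span ({lin u, lin v} : Set (MvPolynomial (Fin ℓ) ℂ)) with hI
  -- pullback of polynomials along the projection of `ℂ^ℓ` onto `ker u ∩ ker v` with kernel the
  -- plane spanned by `w, x`
  let φ : MvPolynomial (Fin ℓ) ℂ →ₐ[ℂ] MvPolynomial (Fin ℓ) ℂ :=
    aeval fun k => X k - C (w k) * lin u - C (x k) * lin v
  have hφ (b : Fin ℓ → ℂ) :
      φ (lin b) = lin b - C (∑ k, b k * w k) * lin u - C (∑ k, b k * x k) * lin v := by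
    have : φ (lin b) = ∑ k, C (b k) * (X k - C (w k) * lin u - C (x k) * lin v) := by
      simp [φ, lin, algebraMap_eq]
    rw [this]
    simp only [mul_sub, Finset.sum_sub_distrib, map_sum, Finset.sum_mul, C_mul, mul_assoc]
    rfl
  have hu0 : φ (lin u) = 0 := by rw [hφ, huw, hux]; simp
  have hv0 : φ (lin v) = 0 := by rw [hφ, hvw, hvx]; simp
  have huI : lin u ∈ I := Ideal.subset_span (by simp)
  have hvI : lin v ∈ I := Ideal.subset_span (by simp)
  have hle : I ≤ RingHom.ker φ := by
    rw [hI, Ideal.span_le]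
    rintro _ (rfl | rfl)
    · exact hu0
    · exact hv0
  have hcomp : (Ideal.Quotient.mkₐ ℂ I).comp φ = Ideal.Quotient.mkₐ ℂ I := by
    ext k
    simp only [φ, AlgHom.comp_apply, aeval_X, Ideal.Quotient.mkₐ_eq_mk]
    rw [Ideal.Quotient.mk_eq_mk_iff_sub_mem]
    have : X k - C (w k) * lin u - C (x k) * lin v - X k
        = -(C (w k)) * lin u + -(C (x k)) * lin v := by ring
    rw [this]
    exact I.add_mem (I.mul_mem_left _ huI) (I.mul_mem_left _ hvI)
  have hker : I = RingHom.ker φ := by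
    refine le_antisymm hle fun f hf => ?_
    have h1 := DFunLike.congr_fun hcomp f
    rw [AlgHom.comp_apply, (RingHom.mem_ker).mp hf, map_zero] at h1
    exact Ideal.Quotient.eq_zero_iff_mem.mp h1.symm
  refine ⟨hker ▸ RingHom.ker_isPrime φ, fun b hb =>
    ⟨∑ k, b k * w k, ∑ k, b k * x k, lin_injective ?_⟩⟩
  · have h0 : φ (lin b) = 0 := hle hb
    rw [hφ] at h0
    rw [lin_add, lin_smul, lin_smul]
    linear_combination h0

lemma pair_le_of_le {ℓ : ℕ} {u v b d : Fin ℓ → ℂ} (hv : v ≠ 0) (h : ∀ c : ℂ, u ≠ c • v)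
    (hb : b ≠ 0) (hd : d ≠ 0) (hbd : ∀ c : ℂ, b ≠ c • d)
    (hle : Ideal.span ({lin b, lin d} : Set (MvPolynomial (Fin ℓ) ℂ)) ≤
      Ideal.span {lin u, lin v}) :
    Ideal.span ({lin u, lin v} : Set (MvPolynomial (Fin ℓ) ℂ)) ≤ Ideal.span {lin b, lin d} := by
  obtain ⟨p, q, hpq⟩ := (pair_prime_and_mem hv h).2 b (hle (Ideal.subset_span (by simp)))
  obtain ⟨r, s, hrs⟩ := (pair_prime_and_mem hv h).2 d (hle (Ideal.subset_span (by simp)))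
  have hu' : (p * s - q * r) • u = s • b - q • d := by
    rw [hpq, hrs]; module
  have hv' : (p * s - q * r) • v = p • d - r • b := by
    rw [hpq, hrs]; module
  -- a relation `e • b = f • d` is trivial
  have hind : ∀ e f : ℂ, e • b = f • d → e = 0 ∧ f = 0 := by
    intro e f hef
    have he : e = 0 := by
      by_contra he
      apply hbd (e⁻¹ * f)
      rw [mul_smul, ← hef, smul_smul, inv_mul_cancel₀ he, one_smul]
    refine ⟨he, ?_⟩
    rw [he, zero_smul] at hef
    exact (smul_eq_zero.mp hef.symm).resolve_right hd
  have hD : p * s - q * r ≠ 0 := by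
    intro hD
    rw [hD, zero_smul] at hu' hv'
    obtain ⟨-, hq⟩ := hind s q (sub_eq_zero.mp hu'.symm)
    obtain ⟨-, hp⟩ := hind r p (sub_eq_zero.mp hv'.symm).symm
    exact hb (by rw [hpq, hp, hq]; simp)
  have hcomb : ∀ (y : Fin ℓ → ℂ) (e f : ℂ), (p * s - q * r) • y = e • b + f • d →
      lin y ∈ Ideal.span ({lin b, lin d} : Set (MvPolynomial (Fin ℓ) ℂ)) := by
    intro y e f hy
    rw [Ideal.mem_span_pair]
    refine ⟨C ((p * s - q * r)⁻¹ * e), C ((p * s - q * r)⁻¹ * f), ?_⟩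
    rw [← lin_smul, ← lin_smul, ← lin_add, mul_smul, mul_smul, ← smul_add, ← hy, smul_smul,
      inv_mul_cancel₀ hD, one_smul]
  rw [Ideal.span_le]
  rintro _ (rfl | rfl)
  · exact hcomb u s (-q) (by rw [hu']; module)
  · exact hcomb v (-r) p (by rw [hv']; module)

/-- Leibniz rule, singling out one factor of the product. -/
lemma pderiv_prod_lin {ℓ n : ℕ} (a : Fin n → Fin ℓ → ℂ) (i : Fin n) (k : Fin ℓ) :
    pderiv k (∏ i, lin (a i)) = lin (a i) * pderiv k (∏ j ∈ Finset.univ.erase i, lin (a j)) +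
      (∏ j ∈ Finset.univ.erase i, lin (a j)) * C (a i k) := by
  rw [← Finset.mul_prod_erase _ _ (Finset.mem_univ i), Derivation.leibniz, pderiv_lin,
    smul_eq_mul, smul_eq_mul]

lemma jac_le_pair {ℓ n : ℕ} (a : Fin n → Fin ℓ → ℂ) {i j : Fin n} (hij : i ≠ j) :
    jac (∏ i, lin (a i)) ≤
      Ideal.span ({lin (a i), lin (a j)} : Set (MvPolynomial (Fin ℓ) ℂ)) := by
  rw [jac, Ideal.span_le]
  rintro _ ⟨k, rfl⟩
  simp only [SetLike.mem_coe]
  rw [pderiv_prod_lin a i k]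
  refine Ideal.add_mem _ (Ideal.mul_mem_right _ _ (Ideal.subset_span (by simp)))
    (Ideal.mul_mem_right _ _ ?_)
  exact Ideal.mem_of_dvd _ (Finset.dvd_prod_of_mem (fun j => lin (a j))
    (Finset.mem_erase.mpr ⟨hij.symm, Finset.mem_univ j⟩))
    (Ideal.subset_span (by simp))

/-- A product of `n ≥ 1` linear forms lies in its Jacobian ideal, by Euler's formula. -/
lemma prod_mem_jac {ℓ n : ℕ} (hn : n ≠ 0) (a : Fin n → Fin ℓ → ℂ) :
    ∏ i, lin (a i) ∈ jac (∏ i, lin (a i)) := by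
  have hhom : (∏ i, lin (a i)).IsHomogeneous n := by
    have := IsHomogeneous.prod Finset.univ (fun i => lin (a i)) (fun _ => 1) fun i _ =>
      IsHomogeneous.sum Finset.univ (fun k => C (a i k) * X k) 1 fun k _ => by
        simpa using (isHomogeneous_C (Fin ℓ) (a i k)).mul (isHomogeneous_X ℂ k)
    simpa using this
  have hE := hhom.sum_X_mul_pderiv
  have hmem : n • ∏ i, lin (a i) ∈ jac (∏ i, lin (a i)) := by
    rw [← hE]
    exact Ideal.sum_mem _ fun k _ => Ideal.mul_mem_left _ _ (Ideal.subset_span ⟨k, rfl⟩)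
  have h2 := Ideal.mul_mem_left _ (C ((n : ℂ)⁻¹)) hmem
  have hn' : (n : ℂ) ≠ 0 := by exact_mod_cast hn
  have h3 : C ((n : ℂ)⁻¹) * (n • ∏ i, lin (a i)) = ∏ i, lin (a i) := by
    rw [nsmul_eq_mul, ← mul_assoc, ← map_natCast (C (R := ℂ) (σ := Fin ℓ)) n, ← C_mul,
      inv_mul_cancel₀ hn', C_1, one_mul]
  rwa [h3] at h2

lemma exists_pair_le {ℓ n : ℕ} (hn : n ≠ 0) (a : Fin n → Fin ℓ → ℂ) (ha0 : ∀ i, a i ≠ 0)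
    {P : Ideal (MvPolynomial (Fin ℓ) ℂ)} (hP : P.IsPrime) (hle : jac (∏ i, lin (a i)) ≤ P) :
    ∃ i j : Fin n, i ≠ j ∧
      Ideal.span ({lin (a i), lin (a j)} : Set (MvPolynomial (Fin ℓ) ℂ)) ≤ P := by
  obtain ⟨i, -, hi⟩ := hP.prod_mem_iff.mp (hle (prod_mem_jac hn a))
  obtain ⟨k, hk⟩ := Function.ne_iff.mp (ha0 i)
  rw [Pi.zero_apply] at hk
  have hd : pderiv k (∏ i, lin (a i)) ∈ P := hle (Ideal.subset_span ⟨k, rfl⟩)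
  rw [pderiv_prod_lin a i k, P.add_mem_iff_right (P.mul_mem_right _ hi)] at hd
  have hunit : C (a i k) ∉ P := fun hC =>
    hP.ne_top (P.eq_top_of_isUnit_mem hC ((IsUnit.mk0 _ hk).map C))
  obtain ⟨j, hj, hjP⟩ := hP.prod_mem_iff.mp ((hP.mem_or_mem hd).resolve_right hunit)
  refine ⟨i, j, (Finset.ne_of_mem_erase hj).symm, ?_⟩
  rw [Ideal.span_le]
  rintro _ (rfl | rfl)
  · exact hi
  · exact hjP

/-- The minimal primes of the Jacobian ideal of a central arrangement are exactly the
ideals `(α_i, α_j)` for pairs `i ≠ j`. -/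
theorem minimalPrimes_jacobian
    {ℓ n : ℕ} (hℓ : 2 ≤ ℓ) (hn : 2 ≤ n)
    (a : Fin n → Fin ℓ → ℂ)
    (ha0 : ∀ i, a i ≠ 0)
    (haprop : ∀ i j, i ≠ j → ∀ c : ℂ, a i ≠ c • a j) :
    (jac (∏ i, lin (a i))).minimalPrimes =
      {P | ∃ i j : Fin n, i ≠ j ∧
        P = Ideal.span ({lin (a i), lin (a j)} : Set (MvPolynomial (Fin ℓ) ℂ))} := by
  have hn0 : n ≠ 0 := by omega
  ext P
  constructor
  · intro hP
    obtain ⟨i, j, hij, hle⟩ := exists_pair_le hn0 a ha0 hP.1.1 hP.1.2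
    have hprime := (pair_prime_and_mem (ha0 j) (haprop i j hij)).1
    exact ⟨i, j, hij, le_antisymm (hP.2 ⟨hprime, jac_le_pair a hij⟩ hle) hle⟩
  · rintro ⟨i, j, hij, rfl⟩
    refine ⟨⟨(pair_prime_and_mem (ha0 j) (haprop i j hij)).1, jac_le_pair a hij⟩, ?_⟩
    rintro P' ⟨hP', hJ⟩ hle
    obtain ⟨r, s, hrs, hle'⟩ := exists_pair_le hn0 a ha0 hP' hJ
    exact (pair_le_of_le (ha0 j) (haprop i j hij) (ha0 r) (ha0 s) (haprop r s hrs)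
      (hle'.trans hle)).trans hle'
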